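/- Let d ≥ 1, r ≥ 0 and let B ∈ BS(Z(d,r)) be a balanced shifted tableau of shape Z(d,r). Then there exists a unique reduced word a ∈ Red(w^{(d,r)}) whose reflection order ro(a) = (γ_1, …, γ_ℓ), with ℓ = d(d+r), satisfies γ_{B(x)} = f(x) for every box x ∈ D(Z(d,r)). -/

import Mathlib

open scoped BigOperators

namespace BST

/-- `lam` (1-indexed, with `d` parts) is a strict partition: strictly decreasing
positive parts `lam 1 > lam 2 > ⋯ > lam d > 0`. -/
def IsStrictPartition (d : ℕ) (lam : ℕ → ℕ) : Prop :=
  (∀ i : ℕ, 1 ≤ i → i < d → lam (i + 1) < lam i) ∧ 1 ≤ lam d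

/-- The size `|λ| = λ_1 + ⋯ + λ_d`. -/
def sizeP (d : ℕ) (lam : ℕ → ℕ) : ℕ := ∑ i ∈ Finset.Icc 1 d, lam i

/-- The shifted diagram `D(λ) ⊆ ℤ × ℤ`: row `i` (1 ≤ i ≤ d) occupies columns
`i - d, …, λ_i + i - d - 1`. -/
def Diagram (d : ℕ) (lam : ℕ → ℕ) : Set (ℤ × ℤ) :=
  {p : ℤ × ℤ | 1 ≤ p.1 ∧ p.1 ≤ (d : ℤ) ∧ p.1 - (d : ℤ) ≤ p.2 ∧
    p.2 + (d : ℤ) + 1 ≤ (lam p.1.toNat : ℤ) + p.1}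

/-- The hook `H(i,c)`. -/
def Hook (d : ℕ) (lam : ℕ → ℕ) (i c : ℤ) : Set (ℤ × ℤ) :=
  {(i, c)} ∪ {p ∈ Diagram d lam | (p.1 = i ∧ c < p.2) ∨ (p.2 = c ∧ i < p.1)} ∪
    {p ∈ Diagram d lam | c < 0 ∧ p.1 = (d : ℤ) + 1 + c}

/-- The extended hook `H̃(i,c)`. -/
def ExtHook (d : ℕ) (lam : ℕ → ℕ) (i c : ℤ) : Set (ℤ × ℤ) :=
  Hook d lam i c ∪ {p : ℤ × ℤ | c < 0 ∧ p = ((d : ℤ) + 1 + c, c)}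

/-- The extended diagram `D(λ) ∪ {(i, i - d - 1) : 1 ≤ i ≤ d}`. -/
def ExtDiagram (d : ℕ) (lam : ℕ → ℕ) : Set (ℤ × ℤ) :=
  Diagram d lam ∪ {p : ℤ × ℤ | 1 ≤ p.1 ∧ p.1 ≤ (d : ℤ) ∧ p.2 = p.1 - ((d : ℤ) + 1)}

/-- The extended filling `B̃`, with `B̃(i, i - d - 1) = B(i, 0)`. -/
def ExtFilling (d : ℕ) (B : ℤ × ℤ → ℕ) : ℤ × ℤ → ℕ :=
  fun p => if p.2 = p.1 - ((d : ℤ) + 1) then B (p.1, 0) else B p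

/-- The rank function `rk(i,c)`. -/
def rk (d : ℕ) (lam : ℕ → ℕ) (i c : ℤ) : ℤ :=
  if 0 ≤ c then (lam i.toNat : ℤ) - d + i - c
  else (lam i.toNat : ℤ) - d + i + (lam ((d : ℤ) + 1 + c).toNat : ℤ) + c + 1

/-- A bijective filling of `D(λ)` with `1, …, |λ|` (normalized to be `0` off the diagram). -/
def IsFilling (d : ℕ) (lam : ℕ → ℕ) (B : ℤ × ℤ → ℕ) : Prop :=
  Set.BijOn B (Diagram d lam) (Set.Icc 1 (sizeP d lam)) ∧
    ∀ p : ℤ × ℤ, p ∉ Diagram d lam → B p = 0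

/-- A balanced shifted tableau: a bijective filling such that at each box `(i,c)`,
`B(i,c)` is the `rk(i,c)`-th largest entry of the multiset of values of `B̃` on the
extended hook, i.e. exactly `rk(i,c) - 1` boxes of the extended hook carry a value
strictly larger than `B(i,c)`. -/
def IsBalanced (d : ℕ) (lam : ℕ → ℕ) (B : ℤ × ℤ → ℕ) : Prop :=
  IsFilling d lam B ∧ ∀ p ∈ Diagram d lam,
    ({q ∈ ExtHook d lam p.1 p.2 | B p < ExtFilling d B q}.ncard : ℤ) =
      rk d lam p.1 p.2 - 1

/-- A standard Young tableau of shifted shape `λ`. -/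
def IsSYT (d : ℕ) (lam : ℕ → ℕ) (B : ℤ × ℤ → ℕ) : Prop :=
  IsFilling d lam B ∧ ∀ p ∈ Diagram d lam, ∀ q ∈ Diagram d lam,
    ((p.1 = q.1 ∧ p.2 < q.2) → B p < B q) ∧ ((p.2 = q.2 ∧ p.1 < q.1) → B p < B q)

/-- The simple reflections of `W(B_n)`, acting on `ℤ`: `s 0` swaps `1 ↔ -1`,
and `s a` (for `a ≥ 1`) swaps `a ↔ a+1` and `-a ↔ -(a+1)`. -/
def sB (a : ℕ) : Equiv.Perm ℤ :=
  if a = 0 then Equiv.swap 1 (-1)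
  else Equiv.swap (a : ℤ) ((a : ℤ) + 1) * Equiv.swap (-(a : ℤ)) (-(a : ℤ) - 1)

/-- The product `s_{a_1} s_{a_2} ⋯ s_{a_m}` of a word. -/
def wordProd (L : List ℕ) : Equiv.Perm ℤ := (L.map sB).prod

/-- A signed permutation in `W(B_n)`: odd, and the identity beyond `n`. -/
def IsSignedPerm (n : ℕ) (w : Equiv.Perm ℤ) : Prop :=
  (∀ i : ℤ, w (-i) = -(w i)) ∧ ∀ i : ℤ, (n : ℤ) < |i| → w i = i

/-- The Coxeter length of `w` in `W(B_n)`. -/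
noncomputable def lengthB (n : ℕ) (w : Equiv.Perm ℤ) : ℕ :=
  sInf {m : ℕ | ∃ L : List ℕ, (∀ a ∈ L, a < n) ∧ wordProd L = w ∧ L.length = m}

/-- `L` is a reduced word of `w` in `W(B_n)`. -/
def IsReducedWord (n : ℕ) (w : Equiv.Perm ℤ) (L : List ℕ) : Prop :=
  (∀ a ∈ L, a < n) ∧ wordProd L = w ∧ L.length = lengthB n w

/-- The vector `e_k` (for `k ≥ 1` the `k`-th standard basis vector, with the
conventions `e 0 = 0` and `e (-k) = - e k`), represented as an odd function `ℤ → ℤ`. -/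
def eVec (k : ℤ) : ℤ → ℤ :=
  fun t => if t = 0 then 0 else if t = k then 1 else if t = -k then -1 else 0

/-- The positive roots of type `B_n`. -/
def PosRoots (n : ℕ) : Set (ℤ → ℤ) :=
  {v | (∃ i j : ℤ, 1 ≤ i ∧ i < j ∧ j ≤ (n : ℤ) ∧
        (v = eVec j - eVec i ∨ v = eVec j + eVec i)) ∨
       (∃ i : ℤ, 1 ≤ i ∧ i ≤ (n : ℤ) ∧ v = eVec i)}

/-- The action of a signed permutation on vectors: `w · e_i = e_{w(i)}`. -/
def actB (w : Equiv.Perm ℤ) (v : ℤ → ℤ) : ℤ → ℤ := fun t => v (w⁻¹ t)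

/-- The inversion set `Inv(w) = {α ∈ Φ⁺ : w⁻¹ · α ∈ -Φ⁺}`. -/
def InvSet (n : ℕ) (w : Equiv.Perm ℤ) : Set (ℤ → ℤ) :=
  {α | α ∈ PosRoots n ∧ -(actB w⁻¹ α) ∈ PosRoots n}

/-- The simple roots: `α_0 = e_1` and `α_a = e_{a+1} - e_a` for `a ≥ 1`. -/
def alphaRoot (a : ℕ) : ℤ → ℤ :=
  if a = 0 then eVec 1 else eVec ((a : ℤ) + 1) - eVec (a : ℤ)

/-- The reflection order of a word: `reflOrder L t = γ_{t+1} = s_{a_1} ⋯ s_{a_t} · α_{a_{t+1}}`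
(0-indexed). -/
def reflOrder (L : List ℕ) (t : ℕ) : ℤ → ℤ :=
  actB (wordProd (L.take t)) (alphaRoot (L.getD t 0))

/-- The trapezoid `Z(d,r) = (r+2d-1, r+2d-3, …, r+1)`. -/
def Zlam (d r : ℕ) : ℕ → ℕ := fun i => r + 2 * d + 1 - 2 * i

/-- The labeling `f : D(Z(d,r)) → Φ⁺`. -/
def fLabel (d r : ℕ) (p : ℤ × ℤ) : ℤ → ℤ :=
  if p.2 ≤ 0 then eVec ((d : ℤ) + 1 - p.1) - eVec p.2
  else if p.2 ≤ (r : ℤ) then eVec ((d : ℤ) + 1 - p.1) + eVec (p.2 + (d : ℤ))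
  else eVec ((d : ℤ) + 1 - p.1) - eVec (p.2 - (r : ℤ))

/-- The extended labeling `f̃`, with `f̃(i, i - d - 1) = 2 e_{d+1-i}`. -/
def fExtLabel (d r : ℕ) (p : ℤ × ℤ) : ℤ → ℤ :=
  if p.2 = p.1 - ((d : ℤ) + 1) then (2 : ℤ) • eVec ((d : ℤ) + 1 - p.1)
  else fLabel d r p

/-- `w` is the signed permutation `w^{(d,r)} ∈ W(B_{d+r})`, i.e.
`w(i) = d + i` for `1 ≤ i ≤ r` and `w(i) = -(i - r)` for `r < i ≤ d + r`. -/
def IsWdr (d r : ℕ) (w : Equiv.Perm ℤ) : Prop :=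
  IsSignedPerm (d + r) w ∧
    (∀ i : ℤ, 1 ≤ i → i ≤ (r : ℤ) → w i = (d : ℤ) + i) ∧
    (∀ i : ℤ, (r : ℤ) < i → i ≤ (d : ℤ) + (r : ℤ) → w i = -(i - r))


/-- `x` lies strictly between `y` and `z` (i.e. `min(y,z) < x < max(y,z)`). -/
def Between (x y z : ℕ) : Prop := (y < x ∧ x < z) ∨ (z < x ∧ x < y)

/-- A nonempty list is unimodal: strictly decreasing down to its minimum
(at 0-indexed position `k`), then strictly increasing. -/
def Unimodal (L : List ℕ) : Prop :=
  ∃ k : ℕ, k < L.length ∧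
    (∀ a b : ℕ, a < b → b ≤ k → L.getD b 0 < L.getD a 0) ∧
    (∀ a b : ℕ, k ≤ a → a < b → b < L.length → L.getD a 0 < L.getD b 0)

/-- Row `i` of the distinguished tableau of shape `Z(d,r)`:
`(r+d-i, …, r+1, 0, 1, …, r+d-i)`. -/
def rowWord (d r i : ℕ) : List ℕ :=
  (List.range (r + 2 * (d - i) + 1)).map fun t =>
    if t < d - i then r + (d - i) - t else t - (d - i)

/-- The reading word `π(T) = T_d T_{d-1} ⋯ T_1` of the distinguished tableau of
shape `Z(d,r)`. -/
def piWord (d r : ℕ) : List ℕ :=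
  (List.range d).flatMap fun k => rowWord d r (d - k)

/-- `μ_i = Z(d,r)_i - λ_i`. -/
def muF (d r : ℕ) (lam : ℕ → ℕ) (i : ℕ) : ℕ := r + 2 * d + 1 - 2 * i - lam i

/-- `σ_i = μ_1 + ⋯ + μ_i`. -/
def sigmaF (d r : ℕ) (lam : ℕ → ℕ) (i : ℕ) : ℕ := ∑ t ∈ Finset.Icc 1 i, muF d r lam t

/-- `ν_i = min{μ_i, …, μ_d}`. -/
noncomputable def nuF (d r : ℕ) (lam : ℕ → ℕ) (i : ℕ) : ℕ :=
  sInf {m : ℕ | ∃ j : ℕ, i ≤ j ∧ j ≤ d ∧ m = muF d r lam j}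

/-- The word `a^λ`: the concatenation over `i = 1, …, d` of the increasing runs
`(d+r-i-μ_i+1, …, d+r-i)`. -/
def aLamWord (d r : ℕ) (lam : ℕ → ℕ) : List ℕ :=
  (List.range d).flatMap fun k =>
    (List.range (muF d r lam (k + 1))).map fun t =>
      d + r - (k + 1) - muF d r lam (k + 1) + 1 + t

/-- Row `i` of the tableau `P(w^λ)`: entries `P(i,c) = c` for `c ≥ 0` and
`P(i,c) = r - c - ν_{d+1+c}` for `c < 0`. -/
noncomputable def rowWordP (d r : ℕ) (lam : ℕ → ℕ) (i : ℕ) : List ℕ :=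
  (List.range (lam i)).map fun t =>
    if t < d - i then r + (d - i) - t - nuF d r lam (i + 1 + t) else t - (d - i)

/-- The reading word `π(P(w^λ))`. -/
noncomputable def piWordP (d r : ℕ) (lam : ℕ → ℕ) : List ℕ :=
  (List.range d).flatMap fun k => rowWordP d r lam (d - k)

/-- The shape obtained from `λ` by adding one box at the end of row `i`. -/
def stepShape (lam : ℕ → ℕ) (i : ℕ) : ℕ → ℕ :=
  fun t => if t = i then lam i + 1 else lam t

/-- The box-adding map `f_i` on fillings: swap columns `j = λ_i + i - d` and `j + 1`
(in rows `1, …, i-1`), and put the value `N + 1` in the new box `(i, j)`. -/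
def addBox (d : ℕ) (lam : ℕ → ℕ) (i : ℕ) (N : ℕ) (B : ℤ × ℤ → ℕ) : ℤ × ℤ → ℕ :=
  fun p =>
    if p = ((i : ℤ), (lam i : ℤ) + (i : ℤ) - (d : ℤ)) then N + 1
    else if 1 ≤ p.1 ∧ p.1 < (i : ℤ) ∧ p.2 = (lam i : ℤ) + (i : ℤ) - (d : ℤ) then
      B (p.1, p.2 + 1)
    else if 1 ≤ p.1 ∧ p.1 < (i : ℤ) ∧ p.2 = (lam i : ℤ) + (i : ℤ) - (d : ℤ) + 1 then
      B (p.1, p.2 - 1)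
    else B p

/-- Successively apply the box-adding maps along a list of row indices,
tracking the current shape. -/
def FmapAux (d : ℕ) : List ℕ → (ℕ → ℕ) → (ℤ × ℤ → ℕ) → (ℤ × ℤ → ℕ)
  | [], _, B => B
  | i :: rest, lam, B => FmapAux d rest (stepShape lam i) (addBox d lam i (sizeP d lam) B)

/-- The shape after successively adding boxes along a list of row indices. -/
def shapeAux : List ℕ → (ℕ → ℕ) → (ℕ → ℕ)
  | [], lam => lam
  | i :: rest, lam => shapeAux rest (stepShape lam i)

/-- The list of row indices `1^{μ_1} 2^{μ_2} ⋯ d^{μ_d}` used to pad `λ` to `Z(d,r)`. -/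
def rowsList (d r : ℕ) (lam : ℕ → ℕ) : List ℕ :=
  (List.range d).flatMap fun k => List.replicate (muF d r lam (k + 1)) (k + 1)

/-- `BS(Z(d,r))|_λ`: balanced tableaux of shape `Z(d,r)` such that for each
`i ∈ {1,…,d}` the entries `N + σ_{i-1} + 1, …, N + σ_i` all occur in row `i`. -/
def BSRestricted (d r : ℕ) (lam : ℕ → ℕ) : Set (ℤ × ℤ → ℕ) :=
  {T | IsBalanced d (Zlam d r) T ∧ ∀ i : ℕ, 1 ≤ i → i ≤ d →
    ∀ k : ℕ, sizeP d lam + sigmaF d r lam (i - 1) + 1 ≤ k →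
      k ≤ sizeP d lam + sigmaF d r lam i →
      ∃ c : ℤ, ((i : ℤ), c) ∈ Diagram d (Zlam d r) ∧ T ((i : ℤ), c) = k}

/-- `w ∈ W(B_n)` pattern embeds the signed pattern `v` (given as its one-line
notation, a list of nonzero integers). -/
def PatternEmbeds (n : ℕ) (w : Equiv.Perm ℤ) (v : List ℤ) : Prop :=
  ∃ idx : Fin v.length → ℤ, StrictMono idx ∧
    (∀ j, 1 ≤ idx j ∧ idx j ≤ (n : ℤ)) ∧
    (∀ j, 0 < w (idx j) ↔ 0 < v.get j) ∧
    (∀ j k, |w (idx j)| < |w (idx k)| ↔ |v.get j| < |v.get k|)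



def colv (d r : ℕ) (b : ℤ) : ℤ :=
  if b < -(d : ℤ) then -(d : ℤ) - b else if b ≤ 0 then b else b + r

def inv (d r : ℕ) (p q : ℤ) : Prop :=
  q < p ∧ -((d : ℤ) + r) ≤ q ∧ p ≤ (d : ℤ) + r ∧
    ((1 ≤ p ∧ p ≤ (d : ℤ)) ∨ (-(d : ℤ) ≤ q ∧ q ≤ -1))

def std (d r : ℕ) (a b : ℤ) : Prop :=
  1 ≤ a ∧ a ≤ (d : ℤ) ∧ b < a ∧ -((d : ℤ) + r) ≤ b ∧ (-a < b ∨ b < -(d : ℤ))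

def bx (d r : ℕ) (p q : ℤ) : ℤ × ℤ :=
  if p = -q then ((d : ℤ) + 1 - p, 0)
  else if 1 ≤ p ∧ p ≤ (d : ℤ) ∧ (-p < q ∨ q < -(d : ℤ)) then ((d : ℤ) + 1 - p, colv d r q)
  else ((d : ℤ) + 1 + q, colv d r (-p))

lemma mem_diag (d r : ℕ) (i c : ℤ) : (i, c) ∈ Diagram d (Zlam d r) ↔
    1 ≤ i ∧ i ≤ (d : ℤ) ∧ i - (d : ℤ) ≤ c ∧ c ≤ (r : ℤ) + d - i := by
  simp only [Diagram, Zlam, Set.mem_ofPred_eq]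
  omega

lemma std_inv {d r : ℕ} {a b : ℤ} (h : std d r a b) : inv d r a b := by
  simp only [std, inv] at *; omega

lemma inv_symm {d r : ℕ} {a b : ℤ} (h : inv d r a b) : inv d r (-b) (-a) := by
  simp only [inv] at *; omega

lemma bx_mem {d r : ℕ} {p q : ℤ} (h : inv d r p q) : bx d r p q ∈ Diagram d (Zlam d r) := by
  simp only [inv] at h
  unfold bx colv
  split_ifs <;> rw [mem_diag] <;> omega

lemma bx_symm {d r : ℕ} {p q : ℤ} (h : inv d r p q) : bx d r p q = bx d r (-q) (-p) := by
  simp only [inv] at h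
  unfold bx colv
  split_ifs <;> simp only [Prod.mk.injEq, and_true, true_and] <;> omega

lemma bx_eq {d r : ℕ} {p q a b : ℤ} (h : inv d r p q) (h' : std d r a b)
    (he : bx d r p q = bx d r a b) :
    (p = a ∧ q = b) ∨ (p = -b ∧ q = -a) ∨ (b = 0 ∧ ((p = 0 ∧ q = -a) ∨ (p = a ∧ q = -a))) := by
  simp only [inv, std] at h h'
  unfold bx colv at he
  split_ifs at he <;> simp only [Prod.mk.injEq, and_true, true_and] at he <;> omega

lemma bx_diag {d r : ℕ} {a b : ℤ} (h' : std d r a b) (hb : b = 0) :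
    bx d r a (-a) = bx d r a b ∧ bx d r 0 (-a) = bx d r a b := by
  simp only [std] at h'
  unfold bx colv
  split_ifs <;> simp only [Prod.mk.injEq, and_true, true_and] <;> omega

lemma box_std {d r : ℕ} {x : ℤ × ℤ} (h : x ∈ Diagram d (Zlam d r)) :
    ∃ a b, std d r a b ∧ x = bx d r a b := by
  obtain ⟨i, c⟩ := x
  rw [mem_diag] at h
  refine ⟨d + 1 - i, if c ≤ 0 then c else if c ≤ r then -(d : ℤ) - c else c - r, ?_, ?_⟩
  · unfold std; split_ifs <;> omega
  · unfold bx colv; split_ifs <;> simp only [Prod.mk.injEq, and_true, true_and] <;> omega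

lemma eVec_neg (k : ℤ) : eVec (-k) = - eVec k := by
  funext t
  simp only [eVec, Pi.neg_apply]
  split_ifs <;> omega

lemma fLabel_bx {d r : ℕ} {a b : ℤ} (h : std d r a b) :
    fLabel d r (bx d r a b) = eVec a - eVec b := by
  simp only [std] at h
  have e : ((d : ℤ) + 1 - (d + 1 - a)) = a := by ring
  unfold bx
  rw [if_neg (by omega), if_pos (by omega)]
  unfold fLabel colv
  simp only [e]
  split_ifs <;> first | omega | rfl | skip
  · rw [show -(d : ℤ) - b + d = -b by ring, eVec_neg, sub_eq_add_neg]
  · rw [show b + (r : ℤ) - r = b by ring]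

lemma count_aux {α β : Type*} (P : Finset α) (E1 E2 : Finset β) (g1 g2 : α → Prop) (h1 h2 : β → Prop)
    [DecidablePred g1] [DecidablePred g2] [DecidablePred h1] [DecidablePred h2]
    (h : (P.filter g1).card + (P.filter g2).card + (E1.filter h1).card + (E2.filter h2).card
      = P.card + E1.card + E2.card) :
    ((∃ c ∈ P, ¬ g1 c ∧ ¬ g2 c) ∨ (∃ e ∈ E1, ¬ h1 e) ∨ (∃ e ∈ E2, ¬ h2 e)) ↔
      ∃ c ∈ P, g1 c ∧ g2 c := by
  classical
  have k1 : (P.filter g1).card + (P.filter g2).card =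
      P.card + (P.filter fun c => g1 c ∧ g2 c).card - (P.filter fun c => ¬ g1 c ∧ ¬ g2 c).card
      ∧ (P.filter fun c => ¬ g1 c ∧ ¬ g2 c).card ≤ P.card := by
    have a1 := Finset.card_union_add_card_inter (P.filter g1) (P.filter g2)
    rw [← Finset.filter_or, ← Finset.filter_and] at a1
    have a2 := Finset.card_filter_add_card_filter_not (s := P) (fun c => g1 c ∨ g2 c)
    simp only [not_or] at a2
    omega
  have k2 := Finset.card_filter_add_card_filter_not (s := E1) h1
  have k3 := Finset.card_filter_add_card_filter_not (s := E2) h2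
  have e1 : (∃ c ∈ P, ¬ g1 c ∧ ¬ g2 c) ↔ 0 < (P.filter fun c => ¬ g1 c ∧ ¬ g2 c).card := by
    rw [Finset.card_pos, Finset.filter_nonempty_iff]
  have e2 : (∃ c ∈ P, g1 c ∧ g2 c) ↔ 0 < (P.filter fun c => g1 c ∧ g2 c).card := by
    rw [Finset.card_pos, Finset.filter_nonempty_iff]
  have e3 : (∃ c ∈ E1, ¬ h1 c) ↔ 0 < (E1.filter fun c => ¬ h1 c).card := by
    rw [Finset.card_pos, Finset.filter_nonempty_iff]
  have e4 : (∃ c ∈ E2, ¬ h2 c) ↔ 0 < (E2.filter fun c => ¬ h2 c).card := by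
    rw [Finset.card_pos, Finset.filter_nonempty_iff]
  rw [e1, e2, e3, e4]
  omega

def phi1 (d r : ℕ) (a c : ℤ) : ℤ × ℤ := ((d : ℤ) + 1 - a, colv d r c)
def phi2 (d r : ℕ) (b c : ℤ) : ℤ × ℤ :=
  if -(d : ℤ) ≤ b ∧ c < -b then ((d : ℤ) + 1 + b, colv d r (-c)) else ((d : ℤ) + 1 - c, colv d r b)
def psi1 (d : ℕ) (a k : ℤ) : ℤ × ℤ := ((d : ℤ) + 1 - a, k)
def psi2 (d : ℕ) (b k : ℤ) : ℤ × ℤ := ((d : ℤ) + 1 + b, k)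
def loP (d : ℕ) (b : ℤ) : ℤ := if b < -(d : ℤ) then 0 else b
def k1 (d r : ℕ) (b : ℤ) : ℤ := if b < -(d : ℤ) then -(d : ℤ) - b else if b ≤ 0 then 0 else r
def k2 (d r : ℕ) (b : ℤ) : ℤ := if b < -(d : ℤ) then r else if b < 0 then 0 else r

lemma mem_exthook {d r : ℕ} {i c i' c' : ℤ} : (i', c') ∈ ExtHook d (Zlam d r) i c ↔
    (i' = i ∧ c' = c) ∨ ((1 ≤ i' ∧ i' ≤ (d : ℤ) ∧ i' - (d : ℤ) ≤ c' ∧ c' ≤ (r : ℤ) + d - i') ∧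
      ((i' = i ∧ c < c') ∨ (c' = c ∧ i < i') ∨ (c < 0 ∧ i' = (d : ℤ) + 1 + c))) ∨
      (c < 0 ∧ i' = (d : ℤ) + 1 + c ∧ c' = c) := by
  simp only [ExtHook, Hook, Set.mem_union, Set.mem_singleton_iff, Set.mem_ofPred_eq, mem_diag,
    Prod.mk.injEq]
  tauto

lemma hook_fwd {d r : ℕ} {a b : ℤ} (h : std d r a b) {x : ℤ × ℤ}
    (hx : x ∈ ExtHook d (Zlam d r) (d + 1 - a) (colv d r b)) :
    x = ((d : ℤ) + 1 - a, colv d r b) ∨ (∃ c, loP d b < c ∧ c < a ∧ phi1 d r a c = x) ∨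
    (∃ c, loP d b < c ∧ c < a ∧ phi2 d r b c = x) ∨
    (∃ k, k1 d r b < k ∧ k ≤ r ∧ psi1 d a k = x) ∨
    (∃ k, k2 d r b < k ∧ k ≤ r ∧ psi2 d b k = x) := by
  obtain ⟨i', c'⟩ := x
  rw [mem_exthook] at hx
  simp only [std] at h
  rcases hx with hx | ⟨hd, hx | hx | hx⟩ | hx
  · left; rw [hx.1, hx.2]
  · by_cases h1 : c' ≤ 0
    · right; left
      refine ⟨c', ?_⟩
      simp only [loP, phi1, Prod.mk.injEq]
      unfold colv at *; split_ifs at * <;> omega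
    · by_cases h2 : c' ≤ r
      · right; right; right; left
        refine ⟨c', ?_⟩
        simp only [k1, psi1, Prod.mk.injEq, and_true]
        unfold colv at *; split_ifs at * <;> omega
      · right; left
        refine ⟨c' - r, ?_⟩
        simp only [loP, phi1, Prod.mk.injEq]
        unfold colv at *; split_ifs at * <;> omega
  · right; right; left
    refine ⟨d + 1 - i', ?_⟩
    unfold loP phi2 
    unfold colv at *; split_ifs at * <;> simp only [Prod.mk.injEq] <;> omega
  · by_cases h1 : c' ≤ 0
    · right; right; left
      refine ⟨-c', ?_⟩
      unfold loP phi2 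
      unfold colv at *; split_ifs at * <;> simp only [Prod.mk.injEq] <;> omega
    · by_cases h2 : c' ≤ r
      · right; right; right; right
        refine ⟨c', ?_⟩
        simp only [k2, psi2, Prod.mk.injEq, and_true]
        unfold colv at *; split_ifs at * <;> omega
      · right; right; left
        refine ⟨r - c', ?_⟩
        unfold loP phi2 
        unfold colv at *; split_ifs at * <;> simp only [Prod.mk.injEq] <;> omega
  · right; right; left
    refine ⟨-b, ?_⟩
    unfold loP phi2 
    unfold colv at *; split_ifs at * <;> simp only [Prod.mk.injEq] <;> omega

lemma phi1_mem {d r : ℕ} {a b c : ℤ} (h : std d r a b) (h1 : loP d b < c) (h2 : c < a) :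
    phi1 d r a c ∈ ExtHook d (Zlam d r) (d + 1 - a) (colv d r b) := by
  simp only [std] at h
  unfold phi1
  rw [mem_exthook]
  unfold loP at h1
  unfold colv; split_ifs at * <;> omega

lemma phi2_mem {d r : ℕ} {a b c : ℤ} (h : std d r a b) (h1 : loP d b < c) (h2 : c < a) :
    phi2 d r b c ∈ ExtHook d (Zlam d r) (d + 1 - a) (colv d r b) := by
  simp only [std] at h
  unfold phi2
  unfold loP at h1
  unfold colv; split_ifs at * <;> rw [mem_exthook] <;> omega

lemma psi1_mem {d r : ℕ} {a b k : ℤ} (h : std d r a b) (h1 : k1 d r b < k) (h2 : k ≤ r) :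
    psi1 d a k ∈ ExtHook d (Zlam d r) (d + 1 - a) (colv d r b) := by
  simp only [std] at h
  unfold psi1
  rw [mem_exthook]
  unfold k1 at h1
  unfold colv; split_ifs at * <;> omega

lemma psi2_mem {d r : ℕ} {a b k : ℤ} (h : std d r a b) (h1 : k2 d r b < k) (h2 : k ≤ r) :
    psi2 d b k ∈ ExtHook d (Zlam d r) (d + 1 - a) (colv d r b) := by
  simp only [std] at h
  unfold psi2
  rw [mem_exthook]
  unfold k2 at h1
  unfold colv; split_ifs at * <;> omega

lemma ext_phi1 {d r : ℕ} {a b c : ℤ} (B : ℤ × ℤ → ℕ) (h : std d r a b) (h1 : loP d b < c)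
    (h2 : c < a) : ExtFilling d B (phi1 d r a c) = B (bx d r a c) := by
  simp only [std] at h
  unfold ExtFilling phi1 bx
  unfold loP at h1
  unfold colv; split_ifs at * <;> first | omega | rfl | (congr 1; simp only [Prod.mk.injEq, and_true, true_and]; omega)

lemma ext_phi2 {d r : ℕ} {a b c : ℤ} (B : ℤ × ℤ → ℕ) (h : std d r a b) (h1 : loP d b < c)
    (h2 : c < a) : ExtFilling d B (phi2 d r b c) = B (bx d r c b) := by
  simp only [std] at h
  unfold ExtFilling phi2 bx
  unfold loP at h1
  unfold colv; split_ifs at * <;> simp only at * <;> first | omega | rfl | (congr 1; simp only [Prod.mk.injEq, and_true, true_and]; omega)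

lemma ext_psi1 {d r : ℕ} {a b k : ℤ} (B : ℤ × ℤ → ℕ) (h : std d r a b) (h1 : k1 d r b < k)
    (h2 : k ≤ r) : ExtFilling d B (psi1 d a k) = B (bx d r a (-d - k)) := by
  simp only [std] at h
  unfold ExtFilling psi1 bx
  unfold k1 at h1
  unfold colv; split_ifs at * <;> simp only at * <;> first | omega | rfl | (congr 1; simp only [Prod.mk.injEq, and_true, true_and]; omega)

lemma ext_psi2 {d r : ℕ} {a b k : ℤ} (B : ℤ × ℤ → ℕ) (h : std d r a b) (h1 : k2 d r b < k)
    (h2 : k ≤ r) : ExtFilling d B (psi2 d b k) = B (bx d r (d + k) b) := by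
  simp only [std] at h
  unfold ExtFilling psi2 bx
  unfold k2 at h1
  unfold colv; split_ifs at * <;> simp only at * <;> first | omega | rfl | (congr 1; simp only [Prod.mk.injEq, and_true, true_and]; omega)

lemma rk_eq {d r : ℕ} {a b : ℤ} (h : std d r a b) :
    rk d (Zlam d r) (d + 1 - a) (colv d r b) - 1 =
      (((Finset.Ioo (loP d b) a).card + (Finset.Ioc (k1 d r b) r).card
        + (Finset.Ioc (k2 d r b) r).card : ℕ) : ℤ) := by
  simp only [std] at h
  simp only [Int.card_Ioo, Int.card_Ioc]
  unfold rk loP k1 k2 Zlam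
  unfold colv; split_ifs at * <;> omega

open Classical in
lemma bal_count {d r : ℕ} {a b : ℤ} (B : ℤ × ℤ → ℕ) (hB : IsBalanced d (Zlam d r) B)
    (h : std d r a b) :
    ((Finset.Ioo (loP d b) a).filter fun c => B (bx d r a b) < B (bx d r a c)).card +
    ((Finset.Ioo (loP d b) a).filter fun c => B (bx d r a b) < B (bx d r c b)).card +
    ((Finset.Ioc (k1 d r b) r).filter fun k => B (bx d r a b) < B (bx d r a (-d - k))).card +
    ((Finset.Ioc (k2 d r b) r).filter fun k => B (bx d r a b) < B (bx d r (d + k) b)).card =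
    (Finset.Ioo (loP d b) a).card + (Finset.Ioc (k1 d r b) (r : ℤ)).card
        + (Finset.Ioc (k2 d r b) (r : ℤ)).card := by
  have hself : bx d r a b = ((d : ℤ) + 1 - a, colv d r b) := by
    simp only [std] at h
    unfold bx
    rw [if_neg (by omega), if_pos (by omega)]
  have hb := hB.2 _ (bx_mem (std_inv h))
  set S1 := (Finset.Ioo (loP d b) a).filter fun c => B (bx d r a b) < B (bx d r a c) with hS1
  set S2 := (Finset.Ioo (loP d b) a).filter fun c => B (bx d r a b) < B (bx d r c b) with hS2
  set S3 := (Finset.Ioc (k1 d r b) (r : ℤ)).filter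
    fun k => B (bx d r a b) < B (bx d r a (-d - k)) with hS3
  set S4 := (Finset.Ioc (k2 d r b) (r : ℤ)).filter
    fun k => B (bx d r a b) < B (bx d r (d + k) b) with hS4
  have hset : {q ∈ ExtHook d (Zlam d r) (bx d r a b).1 (bx d r a b).2 |
      B (bx d r a b) < ExtFilling d B q} =
      ((S1.image (phi1 d r a) ∪ S2.image (phi2 d r b) ∪ S3.image (psi1 d a) ∪
        S4.image (psi2 d b) : Finset (ℤ × ℤ)) : Set (ℤ × ℤ)) := by
    ext x
    simp only [Set.mem_ofPred_eq, Finset.coe_union, Finset.coe_image, Set.mem_union, Set.mem_image,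
      Finset.mem_coe, hS1, hS2, hS3, hS4, Finset.mem_filter, Finset.mem_Ioo, Finset.mem_Ioc]
    constructor
    · rintro ⟨hx, hlt⟩
      rw [hself] at hx
      rcases hook_fwd h hx with rfl | ⟨c, h1, h2, rfl⟩ | ⟨c, h1, h2, rfl⟩ | ⟨c, h1, h2, rfl⟩ |
        ⟨c, h1, h2, rfl⟩
      · exfalso
        rw [← hself] at hlt
        unfold ExtFilling at hlt
        rw [if_neg] at hlt
        · exact lt_irrefl _ hlt
        · rw [hself]
          simp only [std] at h
          unfold colv; split_ifs <;> simp only <;> omega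
      · rw [ext_phi1 B h h1 h2] at hlt
        exact Or.inl (Or.inl (Or.inl ⟨c, ⟨⟨h1, h2⟩, hlt⟩, rfl⟩))
      · rw [ext_phi2 B h h1 h2] at hlt
        exact Or.inl (Or.inl (Or.inr ⟨c, ⟨⟨h1, h2⟩, hlt⟩, rfl⟩))
      · rw [ext_psi1 B h h1 h2] at hlt
        exact Or.inl (Or.inr ⟨c, ⟨⟨h1, h2⟩, hlt⟩, rfl⟩)
      · rw [ext_psi2 B h h1 h2] at hlt
        exact Or.inr ⟨c, ⟨⟨h1, h2⟩, hlt⟩, rfl⟩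
    · rintro (((⟨c, ⟨⟨h1, h2⟩, hlt⟩, rfl⟩ | ⟨c, ⟨⟨h1, h2⟩, hlt⟩, rfl⟩) |
        ⟨c, ⟨⟨h1, h2⟩, hlt⟩, rfl⟩) | ⟨c, ⟨⟨h1, h2⟩, hlt⟩, rfl⟩)
      · rw [ext_phi1 B h h1 h2]; refine ⟨?_, hlt⟩; rw [hself]; exact phi1_mem h h1 h2
      · rw [ext_phi2 B h h1 h2]; refine ⟨?_, hlt⟩; rw [hself]; exact phi2_mem h h1 h2
      · rw [ext_psi1 B h h1 h2]; refine ⟨?_, hlt⟩; rw [hself]; exact psi1_mem h h1 h2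
      · rw [ext_psi2 B h h1 h2]; refine ⟨?_, hlt⟩; rw [hself]; exact psi2_mem h h1 h2
  rw [hset, Set.ncard_coe_finset, hself, rk_eq h] at hb
  have hb' := Int.ofNat.inj hb
  rw [← hb']
  clear hb hb' hset
  have m1 : ∀ x ∈ S1, loP d b < x ∧ x < a := by
    intro x hx; simp only [hS1, Finset.mem_filter, Finset.mem_Ioo] at hx; exact hx.1
  have m2 : ∀ x ∈ S2, loP d b < x ∧ x < a := by
    intro x hx; simp only [hS2, Finset.mem_filter, Finset.mem_Ioo] at hx; exact hx.1
  have m3 : ∀ x ∈ S3, k1 d r b < x ∧ x ≤ r := by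
    intro x hx; simp only [hS3, Finset.mem_filter, Finset.mem_Ioc] at hx; exact hx.1
  have m4 : ∀ x ∈ S4, k2 d r b < x ∧ x ≤ r := by
    intro x hx; simp only [hS4, Finset.mem_filter, Finset.mem_Ioc] at hx; exact hx.1
  clear_value S1 S2 S3 S4
  simp only [std] at h
  unfold loP at m1 m2
  unfold k1 at m3
  unfold k2 at m4
  rw [Finset.card_union_of_disjoint, Finset.card_union_of_disjoint, Finset.card_union_of_disjoint,
    Finset.card_image_of_injOn, Finset.card_image_of_injOn, Finset.card_image_of_injOn,
    Finset.card_image_of_injOn]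
  · intro x hx y hy hxy
    simpa [psi2] using hxy
  · intro x hx y hy hxy
    simpa [psi1] using hxy
  · intro x hx y hy hxy
    have := m2 x hx
    have := m2 y hy
    revert hxy
    unfold phi2 colv
    split_ifs at * <;> simp only [Prod.mk.injEq] <;> omega
  · intro x hx y hy hxy
    have := m1 x hx
    have := m1 y hy
    revert hxy
    unfold phi1 colv
    split_ifs at * <;> simp only [Prod.mk.injEq] <;> omega
  · rw [Finset.disjoint_left]
    intro x hx hy
    rw [Finset.mem_image] at hx hy
    obtain ⟨u, hu, rfl⟩ := hx
    obtain ⟨v, hv, hxy⟩ := hy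
    have := m1 u hu
    have := m2 v hv
    revert hxy
    unfold phi1 phi2 colv
    split_ifs at * <;> simp only [Prod.mk.injEq] <;> omega
  · rw [Finset.disjoint_left]
    intro x hx hy
    rw [Finset.mem_union, Finset.mem_image, Finset.mem_image] at hx
    rw [Finset.mem_image] at hy
    obtain ⟨v, hv, rfl⟩ := hy
    have := m3 v hv
    rcases hx with ⟨u, hu, hxy⟩ | ⟨u, hu, hxy⟩
    · have := m1 u hu
      revert hxy
      unfold phi1 psi1 colv
      split_ifs at * <;> simp only [Prod.mk.injEq] <;> omega
    · have := m2 u hu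
      revert hxy
      unfold phi2 psi1 colv
      split_ifs at * <;> simp only [Prod.mk.injEq] <;> omega
  · rw [Finset.disjoint_left]
    intro x hx hy
    rw [Finset.mem_union, Finset.mem_union, Finset.mem_image, Finset.mem_image,
      Finset.mem_image] at hx
    rw [Finset.mem_image] at hy
    obtain ⟨v, hv, rfl⟩ := hy
    have := m4 v hv
    rcases hx with (⟨u, hu, hxy⟩ | ⟨u, hu, hxy⟩) | ⟨u, hu, hxy⟩
    · have := m1 u hu
      revert hxy
      unfold phi1 psi2 colv
      split_ifs at * <;> simp only [Prod.mk.injEq] <;> omega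
    · have := m2 u hu
      revert hxy
      unfold phi2 psi2 colv
      split_ifs at * <;> simp only [Prod.mk.injEq] <;> omega
    · have := m3 u hu
      revert hxy
      unfold psi1 psi2
      split_ifs at * <;> simp only [Prod.mk.injEq] <;> omega

lemma T_ne {d r : ℕ} {B : ℤ × ℤ → ℕ} (hB : Set.InjOn B (Diagram d (Zlam d r)))
    {p q a b : ℤ} (h : inv d r p q) (h' : std d r a b)
    (hn : ¬ ((p = a ∧ q = b) ∨ (p = -b ∧ q = -a) ∨
      (b = 0 ∧ ((p = 0 ∧ q = -a) ∨ (p = a ∧ q = -a))))) :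
    B (bx d r p q) ≠ B (bx d r a b) := fun he =>
  hn (bx_eq h h' (hB (bx_mem h) (bx_mem (std_inv h')) he))

lemma bal {d r : ℕ} {a b : ℤ} (B : ℤ × ℤ → ℕ) (hB : IsBalanced d (Zlam d r) B)
    (h : std d r a b) :
    ((∃ c, b < c ∧ c < a ∧ inv d r c b ∧ B (bx d r a c) < B (bx d r a b) ∧
        B (bx d r c b) < B (bx d r a b)) ∨
      (∃ c, c < b ∧ inv d r a c ∧ ¬ inv d r b c ∧ B (bx d r a c) < B (bx d r a b)) ∨
      (∃ c, a < c ∧ inv d r c b ∧ ¬ inv d r c a ∧ B (bx d r c b) < B (bx d r a b))) ↔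
    ∃ c, b < c ∧ c < a ∧ inv d r c b ∧ B (bx d r a b) < B (bx d r a c) ∧
        B (bx d r a b) < B (bx d r c b) := by
  have key := count_aux _ _ _ _ _ _ _ (bal_count B hB h)
  have hi := hB.1.1.injOn
  have hP : ∀ c, (b < c ∧ c < a ∧ inv d r c b) ↔ c ∈ Finset.Ioo (loP d b) a := by
    intro c
    simp only [std] at h
    rw [Finset.mem_Ioo]
    unfold inv loP; split_ifs <;> omega
  have n1 : ∀ c, (b < c ∧ c < a ∧ inv d r c b) → B (bx d r a c) ≠ B (bx d r a b) := by
    intro c hc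
    apply T_ne hi _ h
    · simp only [std] at h; omega
    · simp only [std, inv] at h hc ⊢; omega
  have n2 : ∀ c, (b < c ∧ c < a ∧ inv d r c b) → B (bx d r c b) ≠ B (bx d r a b) := by
    intro c hc
    apply T_ne hi hc.2.2 h
    simp only [std] at h; omega
  constructor
  · intro hh
    have : ∃ c ∈ Finset.Ioo (loP d b) a, B (bx d r a b) < B (bx d r a c) ∧
        B (bx d r a b) < B (bx d r c b) := by
      rw [← key]
      rcases hh with ⟨c, h1, h2, h3, h4, h5⟩ | ⟨c, h1, h2, h3, h4⟩ | ⟨c, h1, h2, h3, h4⟩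
      · exact Or.inl ⟨c, (hP c).1 ⟨h1, h2, h3⟩, not_lt.2 h4.le, not_lt.2 h5.le⟩
      · refine Or.inr (Or.inl ⟨-d - c, ?_, ?_⟩)
        · rw [Finset.mem_Ioc]
          simp only [std, inv] at h h2 h3
          unfold k1; split_ifs <;> omega
        · rw [show (-d - (-d - c)) = c by ring]; exact not_lt.2 h4.le
      · refine Or.inr (Or.inr ⟨c - d, ?_, ?_⟩)
        · rw [Finset.mem_Ioc]
          simp only [std, inv] at h h2 h3
          unfold k2; split_ifs <;> omega
        · rw [show (d + (c - d)) = c by ring]; exact not_lt.2 h4.le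
    obtain ⟨c, hc, h1, h2⟩ := this
    obtain ⟨h3, h4, h5⟩ := (hP c).2 hc
    exact ⟨c, h3, h4, h5, h1, h2⟩
  · rintro ⟨c, h1, h2, h3, h4, h5⟩
    have := key.2 ⟨c, (hP c).1 ⟨h1, h2, h3⟩, h4, h5⟩
    rcases this with ⟨c, hc, h1, h2⟩ | ⟨k, hk, h1⟩ | ⟨k, hk, h1⟩
    · have h3 := (hP c).2 hc
      exact Or.inl ⟨c, h3.1, h3.2.1, h3.2.2, lt_of_le_of_ne (not_lt.1 h1) (n1 c h3),
        lt_of_le_of_ne (not_lt.1 h2) (n2 c h3)⟩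
    · rw [Finset.mem_Ioc] at hk
      have f1 : -(d : ℤ) - k < b ∧ inv d r a (-d - k) ∧ ¬ inv d r b (-d - k) := by
        simp only [std, inv, k1] at h hk ⊢
        split_ifs at * <;> omega
      refine Or.inr (Or.inl ⟨-d - k, f1.1, f1.2.1, f1.2.2, lt_of_le_of_ne (not_lt.1 h1) ?_⟩)
      apply T_ne hi f1.2.1 h
      simp only [std, inv] at h f1; omega
    · rw [Finset.mem_Ioc] at hk
      have f1 : a < (d : ℤ) + k ∧ inv d r (d + k) b ∧ ¬ inv d r (d + k) a := by
        simp only [std, inv, k2] at h hk ⊢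
        split_ifs at * <;> omega
      refine Or.inr (Or.inr ⟨d + k, f1.1, f1.2.1, f1.2.2, lt_of_le_of_ne (not_lt.1 h1) ?_⟩)
      apply T_ne hi f1.2.1 h
      simp only [std, inv] at h f1; omega

lemma bal' {d r : ℕ} {a c : ℤ} (B : ℤ × ℤ → ℕ) (hB : IsBalanced d (Zlam d r) B)
    (h1 : 1 ≤ a) (h2 : a ≤ d) (h3 : c < a) (h4 : -((d : ℤ) + r) ≤ c) (h5 : c ≠ -a)
    (hh : (∃ e, c < e ∧ e < a ∧ inv d r e c ∧ B (bx d r a e) < B (bx d r a c) ∧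
        B (bx d r e c) < B (bx d r a c)) ∨
      (∃ e, e < c ∧ inv d r a e ∧ ¬ inv d r c e ∧ B (bx d r a e) < B (bx d r a c))) :
    ∃ e, c < e ∧ e < a ∧ B (bx d r a c) < B (bx d r a e) ∧ inv d r e c ∧
        B (bx d r a c) < B (bx d r e c) := by
  by_cases hs : -a < c ∨ c < -(d : ℤ)
  · have hst : std d r a c := ⟨h1, h2, h3, h4, hs⟩
    obtain ⟨e, g1, g2, g3, g4, g5⟩ := (bal B hB hst).1 (hh.imp_right Or.inl)
    exact ⟨e, g1, g2, g4, g3, g5⟩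
  · have hst : std d r (-c) (-a) := by simp only [std]; omega
    have hac : inv d r a c := by simp only [inv]; omega
    have e0 : bx d r (-c) (-a) = bx d r a c := (bx_symm hac).symm
    have := (bal B hB hst).1 (by
      rcases hh with ⟨e, g1, g2, g3, g4, g5⟩ | ⟨e, g1, g2, g3, g4⟩
      · refine Or.inl ⟨-e, by omega, by omega, ?_, ?_, ?_⟩
        · apply inv_symm; simp only [inv] at *; omega
        · rw [e0, ← bx_symm g3]; exact g5
        · have : inv d r a e := by simp only [inv] at *; omega
          rw [e0, ← bx_symm this]; exact g4
      · refine Or.inr (Or.inr ⟨-e, by omega, inv_symm g2, ?_, ?_⟩)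
        · intro hi; apply g3; have := inv_symm hi; simpa using this
        · rw [e0, ← bx_symm g2]; exact g4)
    obtain ⟨e, g1, g2, g3, g4, g5⟩ := this
    have i1 : inv d r (-c) e := by simp only [inv] at *; omega
    rw [e0] at g4 g5
    rw [bx_symm i1, neg_neg] at g4
    rw [bx_symm g3, neg_neg] at g5
    have i2 := inv_symm i1
    rw [neg_neg] at i2
    exact ⟨-e, by omega, by omega, g5, i2, g4⟩

lemma key {d r : ℕ} {a b : ℤ} (B : ℤ × ℤ → ℕ) (hB : IsBalanced d (Zlam d r) B) (m : ℕ)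
    (u : ℤ → ℤ) (hinj : Function.Injective u) (hodd : ∀ x, u (-x) = - u x)
    (hfix : ∀ c : ℤ, (d : ℤ) + r < |c| → u c = c)
    (hJ : ∀ p q, q < p → (u p < u q ↔ inv d r p q ∧ B (bx d r p q) ≤ m))
    (h : std d r a b) (hT : B (bx d r a b) = m + 1) :
    u b < u a ∧ ∀ c, ¬ (u b < u c ∧ u c < u a) := by
  have hi := hB.1.1.injOn
  have hh := h
  simp only [std] at hh
  have hu0 : u 0 = 0 := by have := hodd 0; simp at this; omega
  have hgt : ∀ p q, q < p → inv d r p q → u q < u p → m < B (bx d r p q) := by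
    intro p q hqp hpq hlt
    by_contra hc
    have := (hJ p q hqp).2 ⟨hpq, by omega⟩
    omega
  have hnj : ∀ p q, q < p → m < B (bx d r p q) → u q < u p := by
    intro p q hqp hlt
    by_contra hc
    have : u p ≠ u q := fun e => by have := hinj e; omega
    have := (hJ p q hqp).1 (by omega)
    omega
  have hab : u b < u a := hnj a b (by omega) (by omega)
  refine ⟨hab, ?_⟩
  have hP : ∀ c, u b < u c → u c < u a → b < c → c < a → inv d r c b → False := by
    intro c c1 c2 c3 c4 c5
    have i1 : inv d r a c := by simp only [inv] at *; omega
    have t1 := hgt a c c4 i1 c2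
    have t2 := hgt c b c3 c5 c1
    have t3 : B (bx d r a c) ≠ B (bx d r a b) := by
      apply T_ne hi i1 h; omega
    have t4 : B (bx d r c b) ≠ B (bx d r a b) := by
      apply T_ne hi c5 h; omega
    have := (bal B hB h).2 ⟨c, c3, c4, c5, by omega, by omega⟩
    rcases this with ⟨e, g1, g2, g3, g4, g5⟩ | ⟨e, g1, g2, g3, g4⟩ | ⟨e, g1, g2, g3, g4⟩
    · have i2 : inv d r a e := by simp only [inv] at *; omega
      have := (hJ a e g2).2 ⟨i2, by omega⟩
      have := (hJ e b g1).2 ⟨g3, by omega⟩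
      omega
    · have := (hJ a e (by omega)).2 ⟨g2, by omega⟩
      exact g3 ((hJ b e g1).1 (by omega)).1
    · have := (hJ e b (by omega)).2 ⟨g2, by omega⟩
      exact g3 ((hJ e a g1).1 (by omega)).1
  have hR : ∀ N : ℕ, ∀ c, a < c → c ≤ a + N → u b < u c → u c < u a → False := by
    intro N
    induction N with
    | zero => intro c; intros; omega
    | succ N ih =>
      intro c c1 c2 c3 c4
      obtain ⟨i1, t1⟩ := (hJ c a c1).1 c4
      have hst : std d r c b := by simp only [std, inv] at *; omega
      have i2 := std_inv hst
      have t2 := hgt c b (by omega) i2 c3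
      have t3 : B (bx d r c b) ≠ B (bx d r a b) := by
        apply T_ne hi i2 h; omega
      obtain ⟨e, g1, g2, g3, g4, g5⟩ := (bal B hB hst).1
        (Or.inl ⟨a, by omega, by omega, std_inv h, by omega, by omega⟩)
      have e1 := hnj c e g2 (by omega)
      have e2 := hnj e b g1 (by omega)
      rcases lt_trichotomy e a with he | he | he
      · exact hP e e2 (by omega) g1 he g3
      · subst he; omega
      · exact ih e he (by push_cast at c2; omega) e2 (by omega)
  have hL : ∀ N : ℕ, ∀ c, c < a → a ≤ c + N → u b < u c → u c < u a → False := by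
    intro N
    induction N with
    | zero => intro c; intros; omega
    | succ N ih =>
      intro c c1 c2 c3 c4
      push_cast at c2
      have hr : -((d : ℤ) + r) ≤ c := by
        by_contra hc
        have e1 := hfix c (by rw [lt_abs]; omega)
        have e2 := hfix (u b) (by rw [lt_abs]; omega)
        have := hinj e2
        omega
      by_cases hca : c = -a
      · have := hodd a
        rw [← hca] at this
        exact ih 0 (by omega) (by omega) (by omega) (by omega)
      · have i1 : inv d r a c := by simp only [inv] at *; omega
        have hcb : c ≠ b := by rintro rfl; omega
        have t1 := hgt a c c1 i1 c4
        have t3 : B (bx d r a c) ≠ B (bx d r a b) := by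
          apply T_ne hi i1 h; omega
        obtain ⟨e, g1, g2, g3, g4, g5⟩ := bal' B hB hh.1 hh.2.1 c1 hr hca (by
          rcases lt_or_gt_of_ne hcb with hlt | hlt
          · obtain ⟨i2, t2⟩ := (hJ b c hlt).1 c3
            exact Or.inl ⟨b, hlt, by omega, i2, by omega, by omega⟩
          · exact Or.inr ⟨b, hlt, std_inv h, fun hv => hP c c3 c4 hlt c1 hv, by omega⟩)
        have e1 := hnj a e g2 (by omega)
        have e2 := hnj e c g1 (by omega)
        exact ih e g2 (by omega) (by omega) e1
  rintro c ⟨c1, c2⟩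
  rcases lt_trichotomy c a with hc | hc | hc
  · exact hL (a - c).toNat c hc (by omega) c1 c2
  · subst hc; omega
  · exact hR (c - a).toNat c hc (by omega) c1 c2

lemma sB_apply (k : ℕ) (x : ℤ) : sB k x =
    if k = 0 then (if x = 1 then -1 else if x = -1 then 1 else x)
    else if x = k then k + 1 else if x = k + 1 then k else if x = -k then -k - 1
    else if x = -k - 1 then -k else x := by
  unfold sB
  by_cases hk : k = 0
  · simp only [hk, if_true, Equiv.swap_apply_def]
  · simp only [hk, if_false, Equiv.Perm.mul_apply, Equiv.swap_apply_def]
    split_ifs <;> omega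

lemma sB_inv (k : ℕ) : (sB k)⁻¹ = sB k := by
  rw [inv_eq_iff_mul_eq_one]
  refine Equiv.ext fun x => ?_
  rw [Equiv.Perm.mul_apply, Equiv.Perm.one_apply]
  have h1 := sB_apply k x
  generalize sB k x = y at *
  rw [sB_apply]
  split_ifs at * <;> omega

lemma sB_signed {n k : ℕ} (hk : k < n) : IsSignedPerm n (sB k) := by
  constructor
  · intro i
    simp only [sB_apply]
    split_ifs <;> omega
  · intro i hi
    rw [lt_abs] at hi
    simp only [sB_apply]
    split_ifs <;> omega

lemma signed_mul {n : ℕ} {v w : Equiv.Perm ℤ} (hv : IsSignedPerm n v) (hw : IsSignedPerm n w) :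
    IsSignedPerm n (v * w) := by
  constructor
  · intro i; simp only [Equiv.Perm.mul_apply, hw.1, hv.1]
  · intro i hi; simp only [Equiv.Perm.mul_apply, hw.2 i hi, hv.2 i hi]

lemma signed_inv {n : ℕ} {v : Equiv.Perm ℤ} (hv : IsSignedPerm n v) : IsSignedPerm n v⁻¹ := by
  constructor
  · intro i
    rw [Equiv.Perm.inv_eq_iff_eq, hv.1]; simp
  · intro i hi; rw [Equiv.Perm.inv_eq_iff_eq, hv.2 i hi]

lemma wordProd_signed {n : ℕ} (L : List ℕ) (h : ∀ k ∈ L, k < n) : IsSignedPerm n (wordProd L) := by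
  induction L with
  | nil => exact ⟨fun i => by simp [wordProd], fun i _ => by simp [wordProd]⟩
  | cons k L ih =>
    have : wordProd (k :: L) = sB k * wordProd L := by simp [wordProd]
    rw [this]
    exact signed_mul (sB_signed (h k (by simp))) (ih fun k hk => h k (by simp [hk]))

lemma wordProd_snoc (L : List ℕ) (k : ℕ) : wordProd (L ++ [k]) = wordProd L * sB k := by
  simp [wordProd]

lemma act_eVec {n : ℕ} {v : Equiv.Perm ℤ} (hv : IsSignedPerm n v) (k : ℤ) :
    actB v (eVec k) = eVec (v k) := by
  have h0 : v 0 = 0 := by have := hv.1 0; simp at this; omega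
  funext t
  simp only [actB, eVec]
  have e1 : v⁻¹ t = 0 ↔ t = 0 := by rw [Equiv.Perm.inv_eq_iff_eq, h0]
  have e2 : v⁻¹ t = k ↔ t = v k := by rw [Equiv.Perm.inv_eq_iff_eq]
  have e3 : v⁻¹ t = -k ↔ t = - v k := by rw [Equiv.Perm.inv_eq_iff_eq, hv.1]
  simp only [e1, e2, e3]

lemma act_sub (v : Equiv.Perm ℤ) (x y : ℤ → ℤ) : actB v (x - y) = actB v x - actB v y := rfl

lemma eVec_zero : eVec 0 = 0 := by
  funext t; simp only [eVec, Pi.zero_apply]; split_ifs <;> omega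

lemma letter {n : ℕ} {A C : ℤ} (h : A = C + 1) (hA : A ≠ 0) (h1 : A ≤ n) (h2 : -(n : ℤ) ≤ C) :
    ∃ k < n, alphaRoot k = eVec A - eVec C ∧ ∀ x y, x ≠ y → (sB k x < sB k y ↔
      (x < y ∧ ¬ (x = C ∧ y = A) ∧ ¬ (x = -A ∧ y = -C) ∧ ¬ (C = 0 ∧ x = -A ∧ y = A)) ∨
      (x = A ∧ y = C) ∨ (x = -C ∧ y = -A) ∨ (C = 0 ∧ x = A ∧ y = -A)) := by
  by_cases hC : 0 ≤ C
  · obtain ⟨k, rfl⟩ := Int.eq_ofNat_of_zero_le hC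
    subst h
    refine ⟨k, by omega, ?_, ?_⟩
    · unfold alphaRoot
      split_ifs with hk
      · subst hk; simp [eVec_zero]
      · rfl
    · intro x y hxy
      simp only [sB_apply]
      split_ifs <;> omega
  · obtain ⟨k, hk⟩ := Int.eq_ofNat_of_zero_le (show 0 ≤ -A by omega)
    have e1 : A = -(k : ℤ) := by omega
    have e2 : C = -((k : ℤ) + 1) := by omega
    subst e1 e2
    refine ⟨k, by omega, ?_, ?_⟩
    · unfold alphaRoot
      rw [if_neg (by omega), eVec_neg, eVec_neg]
      abel
    · intro x y hxy
      simp only [sB_apply]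
      split_ifs <;> omega

lemma inv_app (v : Equiv.Perm ℤ) (x : ℤ) : v⁻¹ (v x) = x := by simp

lemma app_inv (v : Equiv.Perm ℤ) (x : ℤ) : v (v⁻¹ x) = x := by simp

lemma alpha_inj {k l : ℕ} (h : alphaRoot k = alphaRoot l) : k = l := by
  have := congrFun h ((k : ℤ) + 1)
  unfold alphaRoot eVec at this
  by_contra hne
  by_cases hk : k = 0 <;> by_cases hl : l = 0 <;>
    simp only [hk, hl, if_true, if_false, Pi.sub_apply] at this <;> first | omega | (split_ifs at this <;> omega)

lemma act_inj {v : Equiv.Perm ℤ} {x y : ℤ → ℤ} (h : actB v x = actB v y) : x = y := by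
  funext t
  have := congrFun h (v t)
  simpa [actB] using this

lemma refl_unique {N : ℕ} {L L' : List ℕ} (h : L.length = N) (h' : L'.length = N)
    (he : ∀ t < N, reflOrder L t = reflOrder L' t) : L = L' := by
  have : ∀ t ≤ N, L.take t = L'.take t := by
    intro t
    induction t with
    | zero => intro _; simp
    | succ t ih =>
      intro ht
      have e1 := ih (by omega)
      have e2 := he t (by omega)
      unfold reflOrder at e2
      rw [e1] at e2
      have e3 := alpha_inj (act_inj e2)
      rw [List.getD_eq_getElem _ _ (by omega), List.getD_eq_getElem _ _ (by omega)] at e3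
      rw [List.take_succ_eq_append_getElem (by omega), List.take_succ_eq_append_getElem (by omega),
        e1, e3]
  have h2 := this N le_rfl
  rwa [List.take_of_length_le (by omega), List.take_of_length_le (by omega)] at h2

lemma refl_snoc_lt {L : List ℕ} {k t : ℕ} (h : t < L.length) :
    reflOrder (L ++ [k]) t = reflOrder L t := by
  unfold reflOrder
  rw [List.take_append_of_le_length (by omega), List.getD_append _ _ _ _ h]

lemma refl_snoc_eq {L : List ℕ} {k : ℕ} :
    reflOrder (L ++ [k]) L.length = actB (wordProd L) (alphaRoot k) := by
  unfold reflOrder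
  rw [List.take_left, List.getD_append_right _ _ _ _ le_rfl]
  simp

lemma chain {d r : ℕ} (B : ℤ × ℤ → ℕ) (hB : IsBalanced d (Zlam d r) B) (m : ℕ)
    (hm : m ≤ sizeP d (Zlam d r)) :
    ∃ L : List ℕ, L.length = m ∧ (∀ k ∈ L, k < d + r) ∧
      (∀ p q, q < p → ((wordProd L)⁻¹ p < (wordProd L)⁻¹ q ↔ inv d r p q ∧ B (bx d r p q) ≤ m)) ∧
      ∀ x ∈ Diagram d (Zlam d r), B x ≤ m → reflOrder L (B x - 1) = fLabel d r x := by
  induction m with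
  | zero =>
    have hpos : ∀ x ∈ Diagram d (Zlam d r), 1 ≤ B x := fun x hx => (hB.1.1.mapsTo hx).1
    refine ⟨[], rfl, by simp, ?_, ?_⟩
    · intro p q hqp
      constructor
      · intro h; simp [wordProd] at h; omega
      · rintro ⟨h1, h2⟩
        have := hpos _ (bx_mem h1); omega
    · intro x hx h
      have := hpos x hx; omega
  | succ m ih =>
    obtain ⟨L, hlen, hlt, hJ, hro⟩ := ih (by omega)
    obtain ⟨x, hx, hxm⟩ := hB.1.1.surjOn (show m + 1 ∈ Set.Icc 1 (sizeP d (Zlam d r)) from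
      ⟨by omega, hm⟩)
    obtain ⟨a, b, hab, rfl⟩ := box_std hx
    have hsv := wordProd_signed L hlt
    set v := wordProd L with hv
    have hsu := signed_inv hsv
    have hfix : ∀ c : ℤ, (d : ℤ) + r < |c| → v⁻¹ c = c := fun c hc => hsu.2 c (by push_cast; exact hc)
    have hodd := hsu.1
    have hu0 : v⁻¹ 0 = 0 := by have := hodd 0; simp only [neg_zero] at this; omega
    have hinj : Function.Injective (v⁻¹ : Equiv.Perm ℤ) := (v⁻¹).injective
    obtain ⟨k1, k2⟩ := key B hB m (fun z => v⁻¹ z) hinj hodd hfix hJ hab hxm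
    have hA : v⁻¹ a = v⁻¹ b + 1 := by
      have := k2 (v (v⁻¹ b + 1))
      rw [inv_app] at this
      omega
    have hh := hab
    simp only [std] at hh
    have hrange : ∀ c : ℤ, |c| ≤ (d : ℤ) + r → |v⁻¹ c| ≤ (d : ℤ) + r := by
      intro c hc
      by_contra hcon
      push Not at hcon
      have := hinj (hfix _ hcon)
      rw [this] at hcon
      omega
    have ra := abs_le.1 (hrange a (abs_le.2 (by omega)))
    have rb := abs_le.1 (hrange b (abs_le.2 (by omega)))
    have hA0 : v⁻¹ a ≠ 0 := by
      intro h0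
      rw [← hu0] at h0
      have := hinj h0
      omega
    obtain ⟨k, hk, hal, hs⟩ := letter (n := d + r) hA hA0 (by push_cast; omega) (by push_cast; omega)
    refine ⟨L ++ [k], by simp [hlen], ?_, ?_, ?_⟩
    · intro l hl
      rw [List.mem_append, List.mem_singleton] at hl
      rcases hl with hl | rfl
      · exact hlt l hl
      · exact hk
    · intro p q hqp
      rw [wordProd_snoc, mul_inv_rev, sB_inv, Equiv.Perm.mul_apply, Equiv.Perm.mul_apply, ← hv]
      have ia : ∀ z, v⁻¹ z = v⁻¹ a ↔ z = a := fun z => hinj.eq_iff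
      have ib : ∀ z, v⁻¹ z = v⁻¹ b ↔ z = b := fun z => hinj.eq_iff
      have ina : ∀ z, v⁻¹ z = - v⁻¹ a ↔ z = -a := fun z => by rw [← hodd]; exact hinj.eq_iff
      have inb : ∀ z, v⁻¹ z = - v⁻¹ b ↔ z = -b := fun z => by rw [← hodd]; exact hinj.eq_iff
      have i0 : v⁻¹ b = 0 ↔ b = 0 := by
        constructor
        · intro h; rw [← hu0] at h; exact hinj h
        · rintro rfl; exact hu0
      rw [hs _ _ (fun e => by have := hinj e; omega), hJ p q hqp, ia, ia, ib, ib, ina, ina, inb, inb, i0]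
      have hT : (inv d r p q ∧ B (bx d r p q) = m + 1) ↔ (p = a ∧ q = b) ∨ (p = -b ∧ q = -a) ∨
          (b = 0 ∧ ((p = 0 ∧ q = -a) ∨ (p = a ∧ q = -a))) := by
        constructor
        · rintro ⟨h1, h2⟩
          rw [← hxm] at h2
          exact bx_eq h1 hab (hB.1.1.injOn (bx_mem h1) hx h2)
        · rintro (⟨rfl, rfl⟩ | ⟨rfl, rfl⟩ | ⟨hb0, ⟨rfl, rfl⟩ | ⟨rfl, rfl⟩⟩)
          · exact ⟨std_inv hab, hxm⟩
          · exact ⟨inv_symm (std_inv hab), by rw [← bx_symm (std_inv hab)]; exact hxm⟩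
          · refine ⟨by simp only [inv]; omega, ?_⟩
            rw [(bx_diag hab hb0).2]; exact hxm
          · refine ⟨by simp only [inv]; omega, ?_⟩
            rw [(bx_diag hab hb0).1]; exact hxm
      have : (inv d r p q ∧ B (bx d r p q) ≤ m + 1) ↔
          (inv d r p q ∧ B (bx d r p q) ≤ m) ∨ (inv d r p q ∧ B (bx d r p q) = m + 1) := by
        rw [← and_or_left]
        constructor
        · rintro ⟨h1, h2⟩; exact ⟨h1, by omega⟩
        · rintro ⟨h1, h2⟩; exact ⟨h1, by omega⟩
      rw [this, hT]
      generalize (inv d r p q ∧ B (bx d r p q) ≤ m) = X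
      constructor
      · rintro (h | h | h | h)
        · exact Or.inl h.1
        all_goals right; omega
      · rintro (h | h)
        · exact Or.inl ⟨h, by omega, by omega, by omega⟩
        · right; omega
    · intro y hy hym
      by_cases hc : B y = m + 1
      · have : y = bx d r a b := hB.1.1.injOn hy hx (hc.trans hxm.symm)
        rw [hc, this, fLabel_bx hab, Nat.add_sub_cancel, ← hlen, refl_snoc_eq, hal, act_sub,
          act_eVec hsv, act_eVec hsv, app_inv, app_inv]
      · have h1 : 1 ≤ B y := (hB.1.1.mapsTo hy).1
        rw [refl_snoc_lt (by omega)]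
        exact hro y hy (by omega)

def Iv (v : Equiv.Perm ℤ) : Set (ℤ × ℤ) := {x | -x.1 < x.2 ∧ x.2 < x.1 ∧ v⁻¹ x.1 < v⁻¹ x.2}

lemma Iv_le {n : ℕ} (L : List ℕ) (h : ∀ k ∈ L, k < n) : (Iv (wordProd L)).encard ≤ L.length := by
  induction L using List.reverseRecOn with
  | nil =>
    have : Iv (wordProd []) = ∅ := by
      ext x
      simp only [Iv, wordProd, List.map_nil, List.prod_nil, inv_one, Equiv.Perm.one_apply,
        Set.mem_ofPred_eq, Set.mem_empty_iff_false, iff_false]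
      omega
    rw [this]; simp
  | append_singleton L k ih =>
    have ih' := ih fun l hl => h l (by simp [hl])
    have hsv := wordProd_signed L fun l hl => h l (by simp [hl])
    rw [wordProd_snoc]
    set v := wordProd L
    have hodd := (signed_inv hsv).1
    have hinj : Function.Injective (v⁻¹ : Equiv.Perm ℤ) := (v⁻¹).injective
    have hsub : Iv (v * sB k) ⊆ Iv v ∪ (Iv (v * sB k) \ Iv v) := by
      intro x hx; by_cases hxx : x ∈ Iv v
      · exact Or.inl hxx
      · exact Or.inr ⟨hx, hxx⟩
    have hss : (Iv (v * sB k) \ Iv v).Subsingleton := by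
      rintro ⟨p, q⟩ ⟨⟨h1, h2, h3⟩, h4⟩ ⟨p', q'⟩ ⟨⟨h1', h2', h3'⟩, h4'⟩
      simp only at *
      have h5 : ¬ (v⁻¹ p < v⁻¹ q) := fun hh => h4 ⟨h1, h2, hh⟩
      have h5' : ¬ (v⁻¹ p' < v⁻¹ q') := fun hh => h4' ⟨h1', h2', hh⟩
      rw [mul_inv_rev, sB_inv, Equiv.Perm.mul_apply, Equiv.Perm.mul_apply, sB_apply, sB_apply] at h3 h3'
      have e1 : v⁻¹ p ≠ v⁻¹ (-q) := fun e => by have := hinj e; omega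
      have e2 : v⁻¹ p' ≠ v⁻¹ (-q') := fun e => by have := hinj e; omega
      have e3 : v⁻¹ p = v⁻¹ (-q') → p = -q' := fun e => hinj e
      have e4 : v⁻¹ q = v⁻¹ (-p') → q = -p' := fun e => hinj e
      have e5 : v⁻¹ p = v⁻¹ p' → p = p' := fun e => hinj e
      have e6 : v⁻¹ q = v⁻¹ q' → q = q' := fun e => hinj e
      have z0 : v⁻¹ 0 = 0 := by have := hodd 0; simp only [neg_zero] at this; omega
      have z1 : v⁻¹ p ≠ v⁻¹ 0 := fun e => by have := hinj e; omega
      have z2 : v⁻¹ p' ≠ v⁻¹ 0 := fun e => by have := hinj e; omega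
      rw [z0] at z1 z2
      rw [hodd] at e1 e2 e3 e4
      rw [Prod.mk.injEq]
      generalize v⁻¹ p = P at *
      generalize v⁻¹ q = Q at *
      generalize v⁻¹ p' = P' at *
      generalize v⁻¹ q' = Q' at *
      have f1 : (P = k + 1 ∧ Q = k) ∨ (P = -k ∧ Q = -k - 1) := by
        clear h3'
        split_ifs at h3 <;> omega
      have f2 : (P' = k + 1 ∧ Q' = k) ∨ (P' = -k ∧ Q' = -k - 1) := by
        clear h3
        split_ifs at h3' <;> omega
      omega
    calc (Iv (v * sB k)).encard ≤ (Iv v ∪ (Iv (v * sB k) \ Iv v)).encard := Set.encard_le_encard hsub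
      _ ≤ (Iv v).encard + (Iv (v * sB k) \ Iv v).encard := Set.encard_union_le _ _
      _ ≤ L.length + 1 := add_le_add ih' (Set.encard_le_one_iff_subsingleton.2 hss)
      _ = ((L ++ [k]).length : ℕ∞) := by simp

lemma w_inv {d r : ℕ} {w : Equiv.Perm ℤ} (hw : IsWdr d r w) {p q : ℤ} (h : q < p) :
    w⁻¹ p < w⁻¹ q ↔ inv d r p q := by
  have F : ∀ i : ℤ, (i = 0 ∧ w i = 0) ∨ (1 ≤ i ∧ i ≤ r ∧ w i = d + i) ∨
      (r < i ∧ i ≤ d + r ∧ w i = -(i - r)) ∨ (-r ≤ i ∧ i ≤ -1 ∧ w i = -d + i) ∨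
      (-(d + r) ≤ i ∧ i < -r ∧ w i = -i - r) ∨ (i < -(d + r) ∧ w i = i) ∨ (d + r < i ∧ w i = i) := by
    intro i
    have h1 := hw.2.1 i
    have h2 := hw.2.2 i
    have h3 := hw.2.1 (-i)
    have h4 := hw.2.2 (-i)
    have h5 := hw.1.2 i
    rw [lt_abs] at h5
    have h6 := hw.1.1 i
    push_cast at h5
    by_cases h0 : i = 0
    · subst h0
      simp only [neg_zero] at h6
      omega
    · rcases lt_or_gt_of_ne h0 with hn | hn
      · clear h1 h2
        rcases lt_or_ge i (-(d + r)) with a | a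
        · have := h5 (by omega)
          omega
        · rcases lt_or_ge i (-r) with b | b
          · have := h4 (by omega) (by omega)
            clear h3 h4 h5
            omega
          · have := h3 (by omega) (by omega)
            clear h3 h4 h5
            omega
      · clear h3 h4 h6
        rcases lt_or_ge (d + r : ℤ) i with a | a
        · have := h5 (by omega)
          omega
        · rcases lt_or_ge (r : ℤ) i with b | b
          · have := h2 (by omega) (by omega)
            clear h1 h2 h5
            omega
          · have := h1 (by omega) (by omega)
            clear h1 h2 h5
            omega
  obtain ⟨i, rfl⟩ := w.surjective p
  obtain ⟨j, rfl⟩ := w.surjective q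
  rw [inv_app, inv_app]
  have Fi := F i
  have Fj := F j
  unfold inv
  generalize w i = x at *
  generalize w j = y at *
  clear F hw
  rcases Fi with Fi | Fi | Fi | Fi | Fi | Fi | Fi <;>
    rcases Fj with Fj | Fj | Fj | Fj | Fj | Fj | Fj <;> omega

lemma mono_id {g : Equiv.Perm ℤ} (hg : StrictMono g) (h0 : g 0 = 0) : g = 1 := by
  have hs : ∀ i, g (i + 1) = g i + 1 := by
    intro i
    obtain ⟨c, hc⟩ := g.surjective (g i + 1)
    have h1 : i < c := hg.lt_iff_lt.1 (by omega)
    have h2 : g i < g (i + 1) := hg (by omega)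
    have h3 : c ≤ i + 1 := hg.le_iff_le.1 (by omega)
    have : c = i + 1 := by omega
    rw [← this, hc]
  refine Equiv.ext fun i => ?_
  rw [Equiv.Perm.one_apply]
  induction i using Int.induction_on with
  | zero => exact h0
  | succ i ih => rw [hs, ih]
  | pred i ih =>
    have := hs (-i - 1)
    rw [sub_add_cancel] at this
    omega

lemma eq_of_inv {d r : ℕ} {w v : Equiv.Perm ℤ} (hw : IsWdr d r w) (hv : IsSignedPerm (d + r) v)
    (h : ∀ p q, q < p → (v⁻¹ p < v⁻¹ q ↔ inv d r p q)) : v = w := by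
  have hm : StrictMono (v⁻¹ * w : Equiv.Perm ℤ) := by
    intro i j hij
    rw [Equiv.Perm.mul_apply, Equiv.Perm.mul_apply]
    have hne : w i ≠ w j := fun e => by have := w.injective e; omega
    rcases lt_or_gt_of_ne hne with hlt | hlt
    · have := w_inv hw hlt
      rw [← h _ _ hlt, inv_app, inv_app] at this
      have h2 : v⁻¹ (w i) ≠ v⁻¹ (w j) := fun e => hne ((v⁻¹).injective e)
      omega
    · have := w_inv hw hlt
      rw [← h _ _ hlt, inv_app, inv_app] at this
      exact this.1 hij
  have h0 : (v⁻¹ * w : Equiv.Perm ℤ) 0 = 0 := by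
    have := (signed_mul (signed_inv hv) hw.1).1 0
    simp only [neg_zero] at this
    omega
  have := mono_id hm h0
  exact (inv_mul_eq_one.1 this)

lemma size_le {d r : ℕ} {w : Equiv.Perm ℤ} (hw : IsWdr d r w) {B : ℤ × ℤ → ℕ}
    (hB : IsBalanced d (Zlam d r) B) : (sizeP d (Zlam d r) : ℕ∞) ≤ (Iv w).encard := by
  have h1 : (sizeP d (Zlam d r) : ℕ∞) = (Diagram d (Zlam d r)).encard := by
    rw [← hB.1.1.injOn.encard_image, hB.1.1.image_eq, ← Finset.coe_Icc, Set.encard_coe_eq_coe_finsetCard]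
    simp
  rw [h1]
  let g : ℤ × ℤ → ℤ × ℤ := fun x => if x.2 ≤ 0 then (d + 1 - x.1, x.2) else
    if x.2 ≤ r then (d + x.2, -(d + 1 - x.1)) else (d + 1 - x.1, x.2 - r)
  apply Set.encard_le_encard_of_injOn (f := g)
  · rintro ⟨i, c⟩ hx
    rw [mem_diag] at hx
    have : -(g (i, c)).1 < (g (i, c)).2 ∧ (g (i, c)).2 < (g (i, c)).1 ∧
        inv d r (g (i, c)).1 (g (i, c)).2 := by
      simp only [g, inv]
      split_ifs <;> simp only <;> omega
    exact ⟨this.1, this.2.1, (w_inv hw this.2.1).2 this.2.2⟩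
  · rintro ⟨i, c⟩ hx ⟨i', c'⟩ hx' he
    rw [mem_diag] at hx hx'
    simp only [g] at he
    split_ifs at he <;> simp only [Prod.mk.injEq] at he ⊢ <;> omega


/-- every balanced shifted tableau of shape `Z(d,r)` arises from a
unique reduced word of `w^{(d,r)}` via the reflection order:
`γ_{B(x)} = f(x)` for every box `x`. -/
theorem balanced_unique_reduced_word (d r : ℕ) (hd : 1 ≤ d)
    (w : Equiv.Perm ℤ) (hw : IsWdr d r w)
    (B : ℤ × ℤ → ℕ) (hB : IsBalanced d (Zlam d r) B) :
    ∃! L : List ℕ, IsReducedWord (d + r) w L ∧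
      ∀ p ∈ Diagram d (Zlam d r), reflOrder L (B p - 1) = fLabel d r p := by
  obtain ⟨L, hlen, hlt, hJ, hro⟩ := chain B hB _ le_rfl
  have hBle : ∀ x ∈ Diagram d (Zlam d r), B x ≤ sizeP d (Zlam d r) :=
    fun x hx => (hB.1.1.mapsTo hx).2
  have hvw : wordProd L = w := by
    apply eq_of_inv hw (wordProd_signed L hlt)
    intro p q hqp
    rw [hJ p q hqp]
    exact ⟨fun h => h.1, fun h => ⟨h, hBle _ (bx_mem h)⟩⟩
  have hl : lengthB (d + r) w = sizeP d (Zlam d r) := by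
    apply le_antisymm
    · exact Nat.sInf_le ⟨L, hlt, hvw, hlen⟩
    · have hne : {m : ℕ | ∃ L : List ℕ, (∀ a ∈ L, a < d + r) ∧ wordProd L = w ∧
          L.length = m}.Nonempty := ⟨_, L, hlt, hvw, hlen⟩
      refine le_csInf hne ?_
      rintro m ⟨L', h1, h2, rfl⟩
      have h3 := (size_le hw hB).trans (h2 ▸ Iv_le L' h1)
      exact_mod_cast h3
  refine ⟨L, ⟨⟨hlt, hvw, hlen.trans hl.symm⟩, fun p hp => hro p hp (hBle p hp)⟩, ?_⟩
  rintro L' ⟨⟨_, _, h3⟩, h4⟩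
  refine refl_unique (h3.trans hl) hlen ?_
  intro t ht
  obtain ⟨x, hx, hxt⟩ := hB.1.1.surjOn (show t + 1 ∈ Set.Icc 1 (sizeP d (Zlam d r)) from
    ⟨by omega, by omega⟩)
  have e1 := h4 x hx
  have e2 := hro x hx (hBle x hx)
  rw [hxt, Nat.add_sub_cancel] at e1 e2
  rw [e1, e2]

end BST
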